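/- arXiv:2511.06690 — 4 statements merged into one kernel-verified Lean document; each statement's English description precedes it below -/
import Mathlib

section
/- Let X and Y be real Banach spaces and let A : X → Y be a bounded linear operator whose null-space N(A) is uncomplemented in X, i.e., there is no closed subspace V of X with N(A) ∩ V = {0} and N(A) + V = X. Then for every (not necessarily closed) linear subspace U of X with N(A) ∩ U = {0} and N(A) + U = X, there is no constant C > 0 such that ‖u‖ ≤ C·‖A u‖ for all u ∈ U; that is, the pseudoinverse A†_U : R(A) → U is always unbounded. -/
/-- If the null-space of a bounded linear operator `A : X → Y` between real Banach
spaces is uncomplemented in `X`, then for every (not necessarily closed) algebraic complement `U`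
of `N(A)` the pseudoinverse `A†_U` is unbounded, i.e. no `C > 0` satisfies `‖u‖ ≤ C‖Au‖` on `U`. -/
theorem pseudoinverse_unbounded_of_uncomplemented_ker
    {X Y : Type*} [NormedAddCommGroup X] [NormedSpace ℝ X] [CompleteSpace X]
    [NormedAddCommGroup Y] [NormedSpace ℝ Y] [CompleteSpace Y]
    (A : X →L[ℝ] Y)
    (huncompl : ¬ ∃ V : Submodule ℝ X, IsClosed (V : Set X) ∧
      LinearMap.ker (A : X →ₗ[ℝ] Y) ⊓ V = ⊥ ∧ LinearMap.ker (A : X →ₗ[ℝ] Y) ⊔ V = ⊤) :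
    ∀ U : Submodule ℝ X, LinearMap.ker (A : X →ₗ[ℝ] Y) ⊓ U = ⊥ → LinearMap.ker (A : X →ₗ[ℝ] Y) ⊔ U = ⊤ →
      ¬ ∃ C : ℝ, 0 < C ∧ ∀ u ∈ U, ‖u‖ ≤ C * ‖A u‖ := by
  rintro U _ hsup ⟨C, _, hC⟩
  have hclosure : ∀ v ∈ U.topologicalClosure, ‖v‖ ≤ C * ‖A v‖ := by
    have hclosed : IsClosed {v : X | ‖v‖ ≤ C * ‖A v‖} :=
      isClosed_le (by fun_prop) (by fun_prop)
    exact fun v hv => closure_minimal hC hclosed hv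
  refine huncompl ⟨U.topologicalClosure, U.isClosed_topologicalClosure, ?_, ?_⟩
  · refine (Submodule.eq_bot_iff _).2 fun v hv => ?_
    have hAv : A v = 0 := hv.1
    simpa [hAv] using hclosure v hv.2
  · exact top_le_iff.1 (hsup.ge.trans (sup_le_sup_left U.le_topologicalClosure _))
end

section
/- Let X and Y be infinite-dimensional real Banach spaces and let A : X → Y be a bounded linear operator of hybrid type, i.e., A is strictly singular and the range R(A) contains an infinite-dimensional closed linear subspace M of Y. Then the null-space N(A) is uncomplemented in X: there is no closed subspace U of X with N(A) ∩ U = {0} and N(A) + U = X. -/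
/-- A bounded linear operator is strictly singular if its restriction to any
infinite-dimensional closed subspace of the domain is not bounded below. -/
def StrictlySingular {X Y : Type*} [NormedAddCommGroup X] [NormedSpace ℝ X]
    [NormedAddCommGroup Y] [NormedSpace ℝ Y] (A : X →L[ℝ] Y) : Prop :=
  ∀ Z : Submodule ℝ X, IsClosed (Z : Set X) → ¬ FiniteDimensional ℝ Z →
    ¬ ∃ c : ℝ, 0 < c ∧ ∀ z ∈ Z, c * ‖z‖ ≤ ‖A z‖

/-- The null-space of a hybrid-type operator (strictly singular, with an
infinite-dimensional closed subspace contained in its range) between infinite-dimensional real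
Banach spaces is uncomplemented in the domain. -/
theorem hybrid_ker_uncomplemented
    {X Y : Type*} [NormedAddCommGroup X] [NormedSpace ℝ X] [CompleteSpace X]
    [NormedAddCommGroup Y] [NormedSpace ℝ Y] [CompleteSpace Y]
    (hX : ¬ FiniteDimensional ℝ X) (hY : ¬ FiniteDimensional ℝ Y)
    (A : X →L[ℝ] Y) (hss : StrictlySingular A)
    (M : Submodule ℝ Y) (hMcl : IsClosed (M : Set Y)) (hMinf : ¬ FiniteDimensional ℝ M)
    (hMran : (M : Set Y) ⊆ Set.range A) :
    ¬ ∃ U : Submodule ℝ X, IsClosed (U : Set X) ∧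
      LinearMap.ker (A : X →ₗ[ℝ] Y) ⊓ U = ⊥ ∧ LinearMap.ker (A : X →ₗ[ℝ] Y) ⊔ U = ⊤ := by
  rintro ⟨U, hUcl, hdisj, hsup⟩
  let Z : Submodule ℝ X := U ⊓ M.comap (A : X →ₗ[ℝ] Y)
  have hZcl : IsClosed (Z : Set X) := hUcl.inter (hMcl.preimage A.continuous)
  have hmap : Z.map (A : X →ₗ[ℝ] Y) = M := by
    refine le_antisymm (Submodule.map_le_iff_le_comap.2 inf_le_right) fun y hy ↦ ?_
    obtain ⟨x, rfl⟩ := hMran hy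
    obtain ⟨n, hn, u, hu, rfl⟩ := Submodule.mem_sup.1 (hsup ▸ Submodule.mem_top : x ∈ _)
    have hAn : A n = 0 := hn
    rw [map_add, hAn, zero_add] at hy ⊢
    exact ⟨u, ⟨hu, hy⟩, rfl⟩
  have hZinf : ¬ FiniteDimensional ℝ Z := fun _ ↦
    hMinf (hmap ▸ inferInstanceAs (FiniteDimensional ℝ (Z.map (A : X →ₗ[ℝ] Y))))
  have : CompleteSpace Z := hZcl.completeSpace_coe
  let f : Z →L[ℝ] Y := A.comp Z.subtypeL
  have hinj : Function.Injective f := by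
    refine (injective_iff_map_eq_zero f).2 fun z hz ↦ Subtype.ext ?_
    have hmem : (z : X) ∈ LinearMap.ker (A : X →ₗ[ℝ] Y) ⊓ U := ⟨hz, z.2.1⟩
    rw [hdisj] at hmem
    exact hmem
  have hran : Set.range f = (M : Set Y) := by
    rw [← hmap]
    ext y
    simp [f]
  obtain ⟨K, hK⟩ := f.antilipschitz_of_injective_of_isClosed_range hinj (hran ▸ hMcl)
  refine hss Z hZcl hZinf ⟨((K : ℝ) + 1)⁻¹, by positivity, fun z hz ↦ ?_⟩
  have hbound : ‖z‖ ≤ K * ‖A z‖ := f.bound_of_antilipschitz hK ⟨z, hz⟩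
  rw [inv_mul_le_iff₀ (by positivity)]
  linarith [norm_nonneg (A z)]
end

section
/- Fix 1 < q < ∞ and let A_Maz : ℓ¹ → ℓ^q be a Mazur-type operator, i.e., A_Maz x = Σ_{k=1}^∞ x_k ζ⁽ᵏ⁾ for a sequence (ζ⁽ᵏ⁾)_{k∈ℕ} of pairwise distinct elements dense in the unit sphere of ℓ^q. Then A_Maz is strictly singular, A_Maz is not a compact operator, and the null-space N(A_Maz) is uncomplemented in ℓ¹: there is no closed subspace U of ℓ¹ with N(A_Maz) ∩ U = {0} and N(A_Maz) + U = ℓ¹. -/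
open scoped ENNReal

open Filter Topology

namespace lp

variable {p : ℝ≥0∞}

theorem norm_add_rpow_of_disjoint (hp : 0 < p.toReal) (s w : lp (fun _ : ℕ => ℝ) p)
    (h : ∀ i, s i = 0 ∨ w i = 0) :
    ‖s + w‖ ^ p.toReal = ‖s‖ ^ p.toReal + ‖w‖ ^ p.toReal := by
  refine (lp.hasSum_norm hp (s + w)).unique ?_
  convert (lp.hasSum_norm hp s).add (lp.hasSum_norm hp w) using 2 with i
  rcases h i with h | h <;> simp [h, Real.zero_rpow hp.ne']

/-- Every element of `ℓ^p`, `p < ∞`, is approximated by its truncations, which split norms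
with elements supported on the tail. -/
theorem eventually_exists_truncation [Fact (1 ≤ p)] (hp : p ≠ ∞) (s : lp (fun _ : ℕ => ℝ) p)
    {ε : ℝ} (hε : 0 < ε) :
    ∀ᶠ m : ℕ in atTop, ∃ t : lp (fun _ : ℕ => ℝ) p, ‖s - t‖ < ε ∧ ‖t‖ ≤ ‖s‖ ∧
      ∀ w : lp (fun _ : ℕ => ℝ) p, (∀ i < m, w i = 0) →
        ‖t + w‖ ^ p.toReal = ‖t‖ ^ p.toReal + ‖w‖ ^ p.toReal := by
  have hp' : 0 < p.toReal :=
    ENNReal.toReal_pos (zero_lt_one.trans_le (Fact.out : 1 ≤ p)).ne' hp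
  filter_upwards [(lp.hasSum_single hp s).tendsto_sum_nat.eventually (Metric.ball_mem_nhds s hε)]
    with m hm
  set t := ∑ i ∈ Finset.range m, lp.single p i (s i) with ht
  have hcoe : ∀ i, t i = if i < m then s i else 0 := fun i => by
    simp only [ht, lp.coeFn_sum, lp.coeFn_single, Finset.sum_apply, Finset.sum_pi_single,
      Finset.mem_range]
  have hsplit : ∀ w : lp (fun _ : ℕ => ℝ) p, (∀ i < m, w i = 0) →
      ‖t + w‖ ^ p.toReal = ‖t‖ ^ p.toReal + ‖w‖ ^ p.toReal := fun w hw => by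
    refine norm_add_rpow_of_disjoint hp' t w fun i => ?_
    by_cases hi : i < m
    · exact .inr (hw i hi)
    · exact .inl (by simp [hcoe, hi])
  refine ⟨t, by rwa [← dist_eq_norm, dist_comm], ?_, hsplit⟩
  have h := hsplit (s - t) fun i hi => by simp [hcoe, hi]
  rw [add_sub_cancel] at h
  rw [← Real.rpow_le_rpow_iff (norm_nonneg _) (norm_nonneg _) hp', h]
  exact le_add_of_nonneg_right (by positivity)

theorem not_isCompact_sphere [Fact (1 ≤ p)] :
    ¬ IsCompact (Metric.sphere (0 : lp (fun _ : ℕ => ℝ) p) 1) := by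
  intro hc
  have hp : 0 < p := zero_lt_one.trans_le Fact.out
  obtain ⟨a, -, φ, hφ, hlim⟩ := hc.tendsto_subseq (x := fun n => lp.single p n (1 : ℝ))
    (fun n => by simp [lp.norm_single hp])
  obtain ⟨N, hN⟩ := Metric.cauchySeq_iff.1 hlim.cauchySeq 1 one_pos
  have h := hN N le_rfl (N + 1) N.le_succ
  rw [dist_eq_norm] at h
  have h' := lp.norm_apply_le_norm hp.ne'
    (lp.single p (φ N) (1 : ℝ) - lp.single p (φ (N + 1)) (1 : ℝ) : lp (fun _ : ℕ => ℝ) p) (φ N)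
  have hne : φ N ≠ φ (N + 1) := (hφ N.lt_succ_self).ne
  have hval : (lp.single p (φ N) (1 : ℝ) - lp.single p (φ (N + 1)) (1 : ℝ) :
      lp (fun _ : ℕ => ℝ) p) (φ N) = 1 := by
    simp [hne]
  rw [hval, norm_one] at h'
  exact absurd h (not_lt.2 h')

theorem not_finiteDimensional [Fact (1 ≤ p)] :
    ¬ FiniteDimensional ℝ (lp (fun _ : ℕ => ℝ) p) := fun _ =>
  have := FiniteDimensional.proper ℝ (lp (fun _ : ℕ => ℝ) p)
  not_isCompact_sphere (isCompact_sphere (0 : lp (fun _ : ℕ => ℝ) p) 1)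

end lp

section StrictlySingular

variable {q : ℝ≥0∞} [Fact (1 ≤ q)]

/-- An infinite-dimensional subspace of `ℓ¹` contains a unit vector which vanishes, together with
its image, on any prescribed initial segment. -/
theorem exists_norm_eq_one_vanishing
    (A : lp (fun _ : ℕ => ℝ) 1 →L[ℝ] lp (fun _ : ℕ => ℝ) q)
    (Z : Submodule ℝ (lp (fun _ : ℕ => ℝ) 1)) (hZ : ¬ FiniteDimensional ℝ Z) (m : ℕ) :
    ∃ z ∈ Z, ‖z‖ = 1 ∧ ∀ i < m, z i = 0 ∧ A z i = 0 := by
  let L : Z →ₗ[ℝ] (Fin m → ℝ × ℝ) :=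
    { toFun := fun z i => ((z : lp (fun _ : ℕ => ℝ) 1) i, A z i)
      map_add' := fun x y => by ext i <;> simp
      map_smul' := fun c x => by ext i <;> simp }
  have hL : ¬ Function.Injective L := fun h => hZ (FiniteDimensional.of_injective L h)
  rw [injective_iff_map_eq_zero] at hL
  push Not at hL
  obtain ⟨z, hz, hz0⟩ := hL
  have hz0' : ‖(z : lp (fun _ : ℕ => ℝ) 1)‖ ≠ 0 := by simpa using hz0
  refine ⟨‖(z : lp (fun _ : ℕ => ℝ) 1)‖⁻¹ • (z : lp (fun _ : ℕ => ℝ) 1),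
    Z.smul_mem _ z.2, by rw [norm_smul, norm_inv, norm_norm, inv_mul_cancel₀ hz0'], ?_⟩
  intro i hi
  have h := congrFun hz ⟨i, hi⟩
  have h1 : (z : lp (fun _ : ℕ => ℝ) 1) i = 0 := congrArg Prod.fst h
  have h2 : A z i = 0 := congrArg Prod.snd h
  simp [h1, h2]

/-- Gliding hump: an infinite-dimensional subspace of `ℓ¹` contains sums of `N` almost disjoint
unit vectors whose images are almost disjoint in `ℓ^q`. -/
theorem exists_norm_ge_norm_map_le (hq : q ≠ ∞)
    (A : lp (fun _ : ℕ => ℝ) 1 →L[ℝ] lp (fun _ : ℕ => ℝ) q)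
    (Z : Submodule ℝ (lp (fun _ : ℕ => ℝ) 1)) (hZ : ¬ FiniteDimensional ℝ Z) (N : ℕ) :
    ∃ s ∈ Z, (N : ℝ) / 2 ≤ ‖s‖ ∧ ‖A s‖ ^ q.toReal ≤ (‖A‖ + 1) ^ q.toReal * N := by
  have hr : 0 < q.toReal :=
    ENNReal.toReal_pos (zero_lt_one.trans_le (Fact.out : 1 ≤ q)).ne' hq
  induction N with
  | zero => exact ⟨0, Z.zero_mem, by simp, by simp [Real.zero_rpow hr.ne']⟩
  | succ N ih =>
    obtain ⟨s, hsZ, hs, hAs⟩ := ih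
    set r := q.toReal
    set C := ‖A‖ + 1 with hC
    have hlt : ‖A‖ ^ r < C ^ r := Real.rpow_lt_rpow (norm_nonneg _) (by linarith) hr
    set a := (C ^ r * N + ‖A‖ ^ r) ^ r⁻¹ with ha
    set b := (C ^ r * (N + 1)) ^ r⁻¹ with hb
    have hab : a < b := Real.rpow_lt_rpow (by positivity) (by linarith) (by positivity)
    obtain ⟨m, ⟨t, hst, hts, ht⟩, ⟨u, hsu, hus, hu⟩⟩ :=
      ((lp.eventually_exists_truncation ENNReal.one_ne_top s (ε := 1 / 4) (by norm_num)).and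
        (lp.eventually_exists_truncation hq (A s) (sub_pos.2 hab))).exists
    obtain ⟨z, hzZ, hz1, hz⟩ := exists_norm_eq_one_vanishing A Z hZ m
    refine ⟨s + z, Z.add_mem hsZ hzZ, ?_, ?_⟩
    · have h1 := ht z fun i hi => (hz i hi).1
      simp only [ENNReal.toReal_one, Real.rpow_one, hz1] at h1
      have h2 : ‖t + z‖ ≤ ‖s + z‖ + ‖s - t‖ := by
        simpa [add_comm z t] using norm_sub_le (s + z) (s - t)
      have h3 : ‖s‖ ≤ ‖t‖ + ‖s - t‖ := by simpa using norm_add_le t (s - t)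
      push_cast
      linarith
    · have h1 := hu (A z) fun i hi => (hz i hi).2
      have hAz : ‖A z‖ ≤ ‖A‖ := by simpa [hz1] using A.le_opNorm z
      have h2 : ‖u + A z‖ ≤ a := by
        rw [ha, Real.le_rpow_inv_iff_of_pos (norm_nonneg _) (by positivity) hr, h1]
        exact add_le_add ((Real.rpow_le_rpow (norm_nonneg _) hus hr.le).trans hAs)
          (Real.rpow_le_rpow (norm_nonneg _) hAz hr.le)
      have h3 : ‖A (s + z)‖ ≤ ‖u + A z‖ + ‖A s - u‖ := by
        rw [map_add]
        refine le_trans (le_of_eq ?_) (norm_add_le _ _)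
        congr 1
        abel
      have h4 : ‖A (s + z)‖ ≤ b := by linarith
      rw [hb, Real.le_rpow_inv_iff_of_pos (norm_nonneg _) (by positivity) hr] at h4
      exact_mod_cast h4

theorem strictlySingular_of_one_lt (hq1 : 1 < q) (hq : q ≠ ∞)
    (A : lp (fun _ : ℕ => ℝ) 1 →L[ℝ] lp (fun _ : ℕ => ℝ) q) : StrictlySingular A := by
  rintro Z - hZ ⟨c, hc, hA⟩
  have hr1 : 1 < q.toReal := by
    simpa using (ENNReal.toReal_lt_toReal ENNReal.one_ne_top hq).2 hq1
  set r := q.toReal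
  have hbound : ∀ N : ℕ, (c / 2) ^ r * (N : ℝ) ^ (r - 1) ≤ (‖A‖ + 1) ^ r := fun N => by
    rcases N.eq_zero_or_pos with rfl | hN
    · simp only [Nat.cast_zero, Real.zero_rpow (sub_pos.2 hr1).ne', mul_zero]
      positivity
    obtain ⟨s, hsZ, hs, hAs⟩ := exists_norm_ge_norm_map_le hq A Z hZ N
    have hN' : (0 : ℝ) < N := by exact_mod_cast hN
    have h1 : c / 2 * N ≤ ‖A s‖ := by
      calc c / 2 * N = c * (N / 2) := by ring
        _ ≤ c * ‖s‖ := by gcongr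
        _ ≤ ‖A s‖ := hA s hsZ
    have h2 := (Real.rpow_le_rpow (by positivity) h1 (by positivity : 0 ≤ r)).trans hAs
    rw [Real.mul_rpow (by positivity) (by positivity)] at h2
    rw [Real.rpow_sub_one hN'.ne', ← mul_div_assoc, div_le_iff₀ hN']
    exact h2
  have hlim : Tendsto (fun N : ℕ => (c / 2) ^ r * (N : ℝ) ^ (r - 1)) atTop atTop :=
    ((tendsto_rpow_atTop (sub_pos.2 hr1)).comp tendsto_natCast_atTop_atTop).const_mul_atTop
      (by positivity)
  obtain ⟨N, hN⟩ := (hlim.eventually_gt_atTop ((‖A‖ + 1) ^ r)).exists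
  exact absurd (hbound N) (not_le.2 hN)

end StrictlySingular

/-- A bounded operator from a Banach space admitting approximate preimages with norm control
is surjective. -/
theorem ContinuousLinearMap.surjective_of_approx_preimage {X Y : Type*}
    [NormedAddCommGroup X] [NormedSpace ℝ X] [CompleteSpace X]
    [NormedAddCommGroup Y] [NormedSpace ℝ Y] (A : X →L[ℝ] Y)
    (h : ∀ y, ∃ x, ‖y - A x‖ ≤ 1 / 2 * ‖y‖ ∧ ‖x‖ ≤ ‖y‖) : Function.Surjective A := by
  choose g hg hgn using h
  intro y
  let f y := y - A (g y)
  have hf : ∀ n : ℕ, ‖f^[n] y‖ ≤ (1 / 2) ^ n * ‖y‖ := fun n => by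
    induction n with
    | zero => simp
    | succ n ih =>
      rw [Function.iterate_succ_apply', pow_succ', mul_assoc]
      exact (hg _).trans (by gcongr)
  have hsum : Summable fun n => g (f^[n] y) :=
    Summable.of_norm_bounded (summable_geometric_two.mul_right ‖y‖)
      fun n => (hgn _).trans (hf n)
  have hpartial : ∀ n : ℕ, A (∑ i ∈ Finset.range n, g (f^[i] y)) = y - f^[n] y := fun n => by
    induction n with
    | zero => simp
    | succ n ih =>
      rw [Finset.sum_range_succ, map_add, ih, Function.iterate_succ_apply']
      simp only [f]
      abel
  have hzero : Tendsto (fun n => f^[n] y) atTop (𝓝 0) :=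
    squeeze_zero_norm hf (by
      simpa using (tendsto_pow_atTop_nhds_zero_of_lt_one (r := (1 / 2 : ℝ))
        (by norm_num) (by norm_num)).mul_const ‖y‖)
  refine ⟨∑' n, g (f^[n] y), tendsto_nhds_unique
    ((A.continuous.tendsto _).comp hsum.hasSum.tendsto_sum_nat) ?_⟩
  simpa [Function.comp_def, hpartial] using hzero.const_sub y

/-- A strictly singular surjection onto an infinite-dimensional Banach space has uncomplemented
null-space. -/
theorem StrictlySingular.not_exists_isClosed_compl_ker {X Y : Type*}
    [NormedAddCommGroup X] [NormedSpace ℝ X] [CompleteSpace X]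
    [NormedAddCommGroup Y] [NormedSpace ℝ Y] [CompleteSpace Y] {A : X →L[ℝ] Y}
    (hA : StrictlySingular A) (hsurj : Function.Surjective A) (hY : ¬ FiniteDimensional ℝ Y) :
    ¬ ∃ U : Submodule ℝ X, IsClosed (U : Set X) ∧
      LinearMap.ker A.toLinearMap ⊓ U = ⊥ ∧ LinearMap.ker A.toLinearMap ⊔ U = ⊤ := by
  rintro ⟨U, hU, hinf, hsup⟩
  have : CompleteSpace U := hU.completeSpace_coe
  let B : U →L[ℝ] Y := A.comp U.subtypeL
  have hker : B.ker = ⊥ := by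
    rw [LinearMap.ker_eq_bot']
    intro u hu
    have : (u : X) ∈ LinearMap.ker A.toLinearMap ⊓ U := ⟨hu, u.2⟩
    rw [hinf] at this
    exact Subtype.ext this
  have hrange : B.range = ⊤ := by
    rw [LinearMap.range_eq_top]
    intro y
    obtain ⟨x, rfl⟩ := hsurj y
    obtain ⟨n, hn, u, hu, rfl⟩ := Submodule.mem_sup.1 (hsup ▸ Submodule.mem_top : x ∈ _ ⊔ U)
    refine ⟨⟨u, hu⟩, ?_⟩
    have hn' : A n = 0 := hn
    simp [B, hn']
  let e : U ≃L[ℝ] Y := ContinuousLinearEquiv.ofBijective B hker hrange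
  have hUdim : ¬ FiniteDimensional ℝ U := fun _ =>
    hY (FiniteDimensional.of_surjective e.toLinearEquiv.toLinearMap e.surjective)
  refine hA U hU hUdim ⟨(‖(e.symm : Y →L[ℝ] U)‖ + 1)⁻¹, by positivity, fun z hz => ?_⟩
  rw [inv_mul_le_iff₀ (by positivity)]
  have h := (e.symm : Y →L[ℝ] U).le_opNorm (e ⟨z, hz⟩)
  have hez : e ⟨z, hz⟩ = A z := rfl
  rw [ContinuousLinearEquiv.coe_coe, e.symm_apply_apply, hez] at h
  exact h.trans (by gcongr; linarith)

/-- A Mazur-type operator `A : ℓ¹ → ℓ^q` (`1 < q < ∞`), given by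
`A x = ∑' k, x k • ζ k` for a sequence `(ζ k)` of pairwise distinct unit vectors dense in the
unit sphere of `ℓ^q`, is strictly singular, not compact, and its null-space is uncomplemented
in `ℓ¹`. -/
theorem mazur_operator_strictlySingular_not_compact_ker_uncomplemented
    (q : ℝ≥0∞) [Fact (1 ≤ q)] (hq1 : 1 < q) (hq2 : q < ∞)
    (ζ : ℕ → lp (fun _ : ℕ => ℝ) q) (hdist : Function.Injective ζ)
    (hunit : ∀ k, ‖ζ k‖ = 1)
    (hdense : Metric.sphere (0 : lp (fun _ : ℕ => ℝ) q) 1 ⊆ closure (Set.range ζ))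
    (A : lp (fun _ : ℕ => ℝ) 1 →L[ℝ] lp (fun _ : ℕ => ℝ) q)
    (hA : ∀ x : lp (fun _ : ℕ => ℝ) 1, A x = ∑' k, x k • ζ k) :
    StrictlySingular A ∧
      ¬ IsCompact (closure (A '' Metric.closedBall 0 1)) ∧
      ¬ ∃ U : Submodule ℝ (lp (fun _ : ℕ => ℝ) 1), IsClosed (U : Set (lp (fun _ : ℕ => ℝ) 1)) ∧
        LinearMap.ker A.toLinearMap ⊓ U = ⊥ ∧ LinearMap.ker A.toLinearMap ⊔ U = ⊤ := by
  have hsing := strictlySingular_of_one_lt hq1 hq2.ne A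
  have hAe : ∀ k (c : ℝ), A (lp.single 1 k c) = c • ζ k := fun k c => by
    rw [hA, tsum_eq_single k fun j hj => by simp [hj]]
    simp
  refine ⟨hsing, fun hc => ?_, hsing.not_exists_isClosed_compl_ker
    (A.surjective_of_approx_preimage fun y => ?_) lp.not_finiteDimensional⟩
  · refine lp.not_isCompact_sphere (hc.of_isClosed_subset Metric.isClosed_sphere
      (hdense.trans (closure_mono ?_)))
    rintro _ ⟨k, rfl⟩
    exact ⟨lp.single 1 k 1, by simp [lp.norm_single], by simp [hAe]⟩
  · rcases eq_or_ne y 0 with rfl | hy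
    · exact ⟨0, by simp⟩
    have hy' : ‖y‖ ≠ 0 := norm_ne_zero_iff.2 hy
    have hmem : ‖y‖⁻¹ • y ∈ Metric.sphere (0 : lp (fun _ : ℕ => ℝ) q) 1 := by
      simp [norm_smul, hy']
    obtain ⟨_, ⟨k, rfl⟩, hk⟩ := Metric.mem_closure_iff.1 (hdense hmem) (1 / 2) (by norm_num)
    refine ⟨lp.single 1 k ‖y‖, ?_, by simp [lp.norm_single]⟩
    rw [hAe]
    calc ‖y - ‖y‖ • ζ k‖ = ‖‖y‖ • (‖y‖⁻¹ • y - ζ k)‖ := by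
          rw [smul_sub, smul_inv_smul₀ hy']
      _ = ‖y‖ * dist (‖y‖⁻¹ • y) (ζ k) := by rw [norm_smul, norm_norm, dist_eq_norm]
      _ ≤ ‖y‖ * (1 / 2) := by gcongr
      _ = 1 / 2 * ‖y‖ := mul_comm _ _
end

section
/- Let Y be an infinite-dimensional real Banach space and let A : ℓ¹ → Y be a bounded linear operator whose range R(A) is infinite-dimensional. If A is weak*-to-weak sequentially continuous, then R(A) does not contain any infinite-dimensional closed linear subspace of Y; in particular, R(A) is not closed, and the equation A x = y is ill-posed of type II. -/
open Filter

/-- A sequence in `ℓ¹` converges weak* (w.r.t. the predual `c₀`) to `x₀` if all dual pairings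
with null sequences converge. -/
def WeakStarConvLp1 (x : ℕ → lp (fun _ : ℕ => ℝ) 1) (x₀ : lp (fun _ : ℕ => ℝ) 1) : Prop :=
  ∀ c : ℕ → ℝ, Tendsto c atTop (nhds 0) →
    Tendsto (fun n => ∑' k, c k * x n k) atTop (nhds (∑' k, c k * x₀ k))

/-- A bounded linear operator `A : ℓ¹ → Y` is weak*-to-weak sequentially continuous if it maps
weak*-convergent sequences to weakly convergent sequences. -/
def WeakStarToWeakSeqContinuous {Y : Type*} [NormedAddCommGroup Y] [NormedSpace ℝ Y]
    (A : lp (fun _ : ℕ => ℝ) 1 →L[ℝ] Y) : Prop :=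
  ∀ (x : ℕ → lp (fun _ : ℕ => ℝ) 1) (x₀ : lp (fun _ : ℕ => ℝ) 1), WeakStarConvLp1 x x₀ →
    ∀ f : Y →L[ℝ] ℝ, Tendsto (fun n => f (A (x n))) atTop (nhds (f (A x₀)))

theorem hasSum_abs_lp_one (x : lp (fun _ : ℕ => ℝ) 1) : HasSum (fun k => |x k|) ‖x‖ := by
  have h := lp.hasSum_norm (p := 1) (by simp) x
  simpa using h

theorem hasSum_apply_single (h : lp (fun _ : ℕ => ℝ) 1 →L[ℝ] ℝ) (x : lp (fun _ : ℕ => ℝ) 1) :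
    HasSum (fun k => x k * h (lp.single 1 k (1 : ℝ))) (h x) := by
  have hx := (lp.hasSum_single (p := 1) (by simp) x).mapL h
  convert hx using 2 with k
  rw [← smul_eq_mul, ← map_smul, ← lp.single_smul]
  simp

theorem norm_single_one (k : ℕ) :
    ‖(lp.single 1 k (1 : ℝ) : lp (fun _ : ℕ => ℝ) 1)‖ = 1 := by
  rw [lp.norm_single (by simp)]
  simp

/-- Bounded sequences in `ℓ¹` that vanish coordinatewise in the limit are weak* null. -/
theorem weakStarConvLp1_zero {u : ℕ → lp (fun _ : ℕ => ℝ) 1} {K : ℝ} (hK : ∀ n, ‖u n‖ ≤ K)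
    (hu : ∀ k, Tendsto (fun n => u n k) atTop (nhds 0)) : WeakStarConvLp1 u 0 := by
  intro c hc
  have hK0 : 0 ≤ K := (norm_nonneg _).trans (hK 0)
  simp only [lp.coeFn_zero, Pi.zero_apply, mul_zero, tsum_zero]
  rw [Metric.tendsto_atTop]
  intro ε hε
  set δ := ε / (2 * (K + 1)) with hδ
  have hδ0 : 0 < δ := by positivity
  have hδK : δ * K < ε / 2 := by
    rw [hδ, div_mul_eq_mul_div, div_lt_div_iff₀ (by positivity) (by norm_num)]
    nlinarith
  obtain ⟨N, hN⟩ := Metric.tendsto_atTop.1 hc δ hδ0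
  have hfin : Tendsto (fun n => ∑ k ∈ Finset.range N, |c k| * |u n k|) atTop (nhds 0) := by
    have := tendsto_finsetSum (Finset.range N)
      (fun k _ => ((hu k).abs.const_mul (|c k|)))
    simpa using this
  obtain ⟨n₀, hn₀⟩ := Metric.tendsto_atTop.1 hfin (ε / 2) (by positivity)
  refine ⟨n₀, fun n hn => ?_⟩
  have hsmall := (abs_lt.1 (by simpa [Real.dist_eq] using hn₀ n hn)).2
  have h1 : HasSum (fun k => δ * |u n k|) (δ * ‖u n‖) := (hasSum_abs_lp_one (u n)).mul_left δ
  have h2 : HasSum (fun k => if k ∈ Finset.range N then |c k| * |u n k| else 0)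
      (∑ k ∈ Finset.range N, |c k| * |u n k|) := by
    have := hasSum_sum_of_ne_finset_zero (s := Finset.range N)
      (f := fun k => if k ∈ Finset.range N then |c k| * |u n k| else 0)
      (fun k hk => if_neg hk) (L := SummationFilter.unconditional ℕ)
    rwa [Finset.sum_congr rfl (fun k hk => if_pos hk)] at this
  have hle := tsum_of_norm_bounded (f := fun k => c k * u n k) (h1.add h2) (fun k => by
    rw [Real.norm_eq_abs, abs_mul]
    by_cases hk : k ∈ Finset.range N
    · rw [if_pos hk]
      have : 0 ≤ δ * |u n k| := by positivity
      linarith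
    · rw [if_neg hk, add_zero]
      have := hN k (by simpa using hk)
      rw [Real.dist_eq, sub_zero] at this
      gcongr)
  rw [Real.dist_eq, sub_zero, ← Real.norm_eq_abs]
  have : δ * ‖u n‖ ≤ δ * K := by gcongr; exact hK n
  linarith

theorem weakStarConvLp1_single :
    WeakStarConvLp1 (fun k => lp.single 1 k (1 : ℝ)) 0 := by
  refine weakStarConvLp1_zero (K := 1) (fun n => (norm_single_one n).le) fun k => ?_
  refine tendsto_const_nhds.congr' ?_
  filter_upwards [eventually_gt_atTop k] with n hn
  rw [lp.single_apply, Pi.single_eq_of_ne hn.ne]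

/-- Bounded functionals on `ℓ¹` that converge on the unit vectors converge pointwise. -/
theorem tendsto_apply_of_tendsto_single {h : ℕ → lp (fun _ : ℕ => ℝ) 1 →L[ℝ] ℝ} {K : ℝ}
    (hK : ∀ n, ‖h n‖ ≤ K) {l : ℕ → ℝ}
    (hl : ∀ k, Tendsto (fun n => h n (lp.single 1 k (1 : ℝ))) atTop (nhds (l k)))
    (x : lp (fun _ : ℕ => ℝ) 1) :
    Tendsto (fun n => h n x) atTop (nhds (∑' k, x k * l k)) := by
  have := tendsto_tsum_of_dominated_convergence (𝓕 := atTop)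
    (f := fun n k => x k * h n (lp.single 1 k (1 : ℝ))) (g := fun k => x k * l k)
    (bound := fun k => |x k| * K) ((hasSum_abs_lp_one x).summable.mul_right K)
    (fun k => (hl k).const_mul _)
    (Eventually.of_forall fun n k => by
      rw [norm_mul, Real.norm_eq_abs (x k)]
      gcongr
      exact ((h n).le_of_opNorm_le (hK n) _).trans (by rw [norm_single_one, mul_one]))
  exact this.congr fun n => (hasSum_apply_single (h n) x).tsum_eq

/-- A bounded family of real sequences has a coordinatewise convergent subsequence. -/
theorem exists_subseq_tendsto_coordinates {a : ℕ → ℕ → ℝ} {K : ℝ} (ha : ∀ n k, |a n k| ≤ K) :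
    ∃ φ : ℕ → ℕ, StrictMono φ ∧
      ∃ l : ℕ → ℝ, ∀ k, Tendsto (fun n => a (φ n) k) atTop (nhds (l k)) := by
  have hc : IsCompact (Set.univ.pi fun _ : ℕ => Set.Icc (-K) K) :=
    isCompact_univ_pi fun _ => isCompact_Icc
  obtain ⟨l, -, φ, hφ, hl⟩ := hc.tendsto_subseq (x := a) fun n k _ => abs_le.1 (ha n k)
  exact ⟨φ, hφ, l, fun k => tendsto_pi_nhds.1 hl k⟩

theorem eventually_abs_le_of_tendsto_zero {a : ℕ → ℝ} (ha : Tendsto a atTop (nhds 0)) {ε : ℝ}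
    (hε : 0 < ε) : ∀ᶠ n in atTop, |a n| ≤ ε := by
  filter_upwards [Metric.tendsto_nhds.1 ha ε hε] with n hn
  rw [Real.dist_eq, sub_zero] at hn
  exact hn.le

/-- Gliding hump: if rows and columns of `a` and `b` are null sequences, then along a subsequence
the rows of `a` are almost disjointly supported and `b` is almost diagonal. -/
theorem exists_gliding_hump {a b : ℕ → ℕ → ℝ}
    (ha_row : ∀ p, Tendsto (fun k => a p k) atTop (nhds 0))
    (ha_col : ∀ k, Tendsto (fun p => a p k) atTop (nhds 0))
    (hb_row : ∀ p, Tendsto (fun q => b p q) atTop (nhds 0))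
    (hb_col : ∀ q, Tendsto (fun p => b p q) atTop (nhds 0)) :
    ∃ n : ℕ → ℕ, StrictMono n ∧
      (∀ k i j, i < j → |a (n i) k| ≤ (1 / 2) ^ i ∨ |a (n j) k| ≤ (1 / 2) ^ j) ∧
      ∀ i j, i ≠ j → |b (n i) (n j)| ≤ 1 / 8 * (1 / 2) ^ i := by
  -- A triple is a tolerance level, an index, and a bound beyond which the row is small.
  obtain ⟨t, ht, hr⟩ := exists_seq_of_forall_finset_exists
    (fun t : ℕ × ℕ × ℕ => ∀ k, t.2.2 ≤ k → |a t.2.1 k| ≤ (1 / 2) ^ t.1)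
    (fun s t => s.1 < t.1 ∧ s.2.1 < t.2.1 ∧ (∀ k < s.2.2, |a t.2.1 k| ≤ (1 / 2) ^ t.1) ∧
      |b s.2.1 t.2.1| ≤ 1 / 8 * (1 / 2) ^ t.1 ∧ |b t.2.1 s.2.1| ≤ 1 / 8 * (1 / 2) ^ t.1)
    (by
      intro s _
      obtain ⟨l, hl⟩ : ∃ l, ∀ x ∈ s, x.1 < l :=
        ⟨s.sup Prod.fst + 1, fun x hx => Nat.lt_succ_of_le (Finset.le_sup (f := Prod.fst) hx)⟩
      have hev : ∀ᶠ p in atTop, ∀ x ∈ s, x.2.1 < p ∧ (∀ k ∈ Finset.range x.2.2,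
          |a p k| ≤ (1 / 2) ^ l) ∧ |b x.2.1 p| ≤ 1 / 8 * (1 / 2) ^ l ∧
          |b p x.2.1| ≤ 1 / 8 * (1 / 2) ^ l := by
        rw [Filter.eventually_all_finset]
        intro x _
        refine (eventually_gt_atTop _).and (Eventually.and ?_ (Eventually.and ?_ ?_))
        · rw [Filter.eventually_all_finset]
          exact fun k _ => eventually_abs_le_of_tendsto_zero (ha_col k) (by positivity)
        · exact eventually_abs_le_of_tendsto_zero (hb_row _) (by positivity)
        · exact eventually_abs_le_of_tendsto_zero (hb_col _) (by positivity)
      obtain ⟨p, hp⟩ := hev.exists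
      obtain ⟨N, hN⟩ := eventually_atTop.1
        (eventually_abs_le_of_tendsto_zero (ha_row p) (ε := (1 / 2) ^ l) (by positivity))
      refine ⟨(l, p, N), hN, fun x hx => ?_⟩
      obtain ⟨h1, h2, h3, h4⟩ := hp x hx
      exact ⟨hl x hx, h1, fun k hk => h2 k (Finset.mem_range.2 hk), h3, h4⟩)
  have hlevel : StrictMono fun i => (t i).1 := fun i j hij => (hr i j hij).1
  have hpow : ∀ i, ((1 : ℝ) / 2) ^ (t i).1 ≤ (1 / 2) ^ i := fun i =>
    pow_le_pow_of_le_one (by norm_num) (by norm_num) (hlevel.id_le i)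
  refine ⟨fun i => (t i).2.1, fun i j hij => (hr i j hij).2.1, fun k i j hij => ?_,
    fun i j hij => ?_⟩
  · rcases le_or_gt (t i).2.2 k with hk | hk
    · exact Or.inl ((ht i k hk).trans (hpow i))
    · exact Or.inr (((hr i j hij).2.2.1 k hk).trans (hpow j))
  · rcases lt_or_gt_of_ne hij with h | h
    · refine (hr i j h).2.2.2.1.trans ?_
      have : ((1 : ℝ) / 2) ^ (t j).1 ≤ (1 / 2) ^ (t i).1 :=
        pow_le_pow_of_le_one (by norm_num) (by norm_num) (hlevel h).le
      linarith [hpow i]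
    · refine (hr j i h).2.2.2.2.trans ?_
      linarith [hpow i]

theorem sum_half_pow_le_two (s : Finset ℕ) : ∑ j ∈ s, ((1 : ℝ) / 2) ^ j ≤ 2 :=
  (summable_geometric_two.sum_le_tsum s fun _ _ => by positivity).trans tsum_geometric_two.le

/-- A bounded family, all but one of whose members are geometrically small, has bounded sums. -/
theorem sum_le_of_pairwise_small {c : ℕ → ℝ} {D : ℝ} (hD : ∀ j, c j ≤ D) (hD0 : 0 ≤ D)
    (hc : ∀ i j, i < j → c i ≤ (1 / 2) ^ i ∨ c j ≤ (1 / 2) ^ j) (s : Finset ℕ) :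
    ∑ j ∈ s, c j ≤ D + 2 := by
  by_cases h : ∃ i ∈ s, (1 / 2) ^ i < c i
  · obtain ⟨i, hi, hlt⟩ := h
    rw [← Finset.add_sum_erase s c hi]
    refine add_le_add (hD i) ((Finset.sum_le_sum fun j hj => ?_).trans
      (sum_half_pow_le_two (s.erase i)))
    rcases lt_or_gt_of_ne (Finset.ne_of_mem_erase hj) with hji | hij
    · exact (hc j i hji).resolve_right hlt.not_ge
    · exact (hc i j hij).resolve_left hlt.not_ge
  · push Not at h
    linarith [(Finset.sum_le_sum h).trans (sum_half_pow_le_two s)]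

/-- Finite sums of absolute values of functionals on `ℓ¹` are controlled by their values on the
unit vectors. -/
theorem sum_abs_apply_le {g : ℕ → lp (fun _ : ℕ => ℝ) 1 →L[ℝ] ℝ} {s : Finset ℕ} {C : ℝ}
    (hg : ∀ k, ∑ j ∈ s, |g j (lp.single 1 k (1 : ℝ))| ≤ C) (x : lp (fun _ : ℕ => ℝ) 1) :
    ∑ j ∈ s, |g j x| ≤ C * ‖x‖ := by
  have hs : ∀ j, Summable fun k => |x k| * |g j (lp.single 1 k (1 : ℝ))| := fun j => by
    simpa only [abs_mul] using (hasSum_apply_single (g j) x).summable.abs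
  calc ∑ j ∈ s, |g j x| ≤ ∑ j ∈ s, ∑' k, |x k| * |g j (lp.single 1 k (1 : ℝ))| := by
        refine Finset.sum_le_sum fun j _ => ?_
        rw [← (hasSum_apply_single (g j) x).tsum_eq, ← Real.norm_eq_abs]
        exact tsum_of_norm_bounded (hs j).hasSum fun k => by
          rw [Real.norm_eq_abs, abs_mul]
    _ = ∑' k, ∑ j ∈ s, |x k| * |g j (lp.single 1 k (1 : ℝ))| :=
        (Summable.tsum_finsetSum fun j _ => hs j).symm
    _ ≤ ∑' k, C * |x k| := by
        refine Summable.tsum_le_tsum (fun k => ?_) (summable_sum fun j _ => hs j)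
          ((hasSum_abs_lp_one x).summable.mul_left C)
        rw [← Finset.mul_sum, mul_comm]
        exact mul_le_mul_of_nonneg_right (hg k) (abs_nonneg _)
    _ = C * ‖x‖ := ((hasSum_abs_lp_one x).mul_left C).tsum_eq

section

variable {Y : Type*} [NormedAddCommGroup Y] [NormedSpace ℝ Y]

/-- The open mapping theorem for the part of an operator lying over a closed subspace of its
range. -/
theorem exists_bounded_preimage {X : Type*} [NormedAddCommGroup X] [NormedSpace ℝ X]
    [CompleteSpace X] [CompleteSpace Y] (A : X →L[ℝ] Y) (M : Submodule ℝ Y)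
    (hM : IsClosed (M : Set Y)) (hMA : (M : Set Y) ⊆ Set.range A) :
    ∃ C > 0, ∀ y ∈ M, ∃ x, A x = y ∧ ‖x‖ ≤ C * ‖y‖ := by
  let N : Submodule ℝ X := M.comap A.toLinearMap
  have hN : IsClosed (N : Set X) := hM.preimage A.continuous
  have : CompleteSpace M := hM.completeSpace_coe
  have : CompleteSpace N := hN.completeSpace_coe
  let B : N →L[ℝ] M := (A.comp N.subtypeL).codRestrict M fun x => x.2
  have hB : Function.Surjective B := by
    rintro ⟨y, hy⟩
    obtain ⟨x, rfl⟩ := hMA hy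
    exact ⟨⟨x, hy⟩, rfl⟩
  obtain ⟨C, hC, h⟩ := B.exists_preimage_norm_le hB
  refine ⟨C, hC, fun y hy => ?_⟩
  obtain ⟨x, hx, hxn⟩ := h ⟨y, hy⟩
  exact ⟨x, congrArg Subtype.val hx, hxn⟩

/-- A closed infinite-dimensional subspace of the range contains a weakly null sequence bounded
away from zero. -/
theorem exists_weakly_null_seq (A : lp (fun _ : ℕ => ℝ) 1 →L[ℝ] Y)
    (hw : WeakStarToWeakSeqContinuous A) (M : Submodule ℝ Y) {C : ℝ} (hC : 0 < C)
    (hlift : ∀ y ∈ M, ∃ x, A x = y ∧ ‖x‖ ≤ C * ‖y‖) (hM : ¬ FiniteDimensional ℝ M) :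
    ∃ v : ℕ → Y, (∀ n, v n ∈ M) ∧ (∀ n, 1 ≤ ‖v n‖) ∧
      ∀ f : Y →L[ℝ] ℝ, Tendsto (fun n => f (v n)) atTop (nhds 0) := by
  obtain ⟨R, y, -, hyR, hsep⟩ := exists_seq_norm_le_one_le_norm_sub (𝕜 := ℝ) (E := M) hM
  choose x hx hxn using fun n => hlift (y n) (y n).2
  have hxb : ∀ n, ‖x n‖ ≤ C * R := fun n =>
    (hxn n).trans (mul_le_mul_of_nonneg_left (hyR n) hC.le)
  obtain ⟨φ, hφ, l, hl⟩ := exists_subseq_tendsto_coordinates (a := fun n k => x n k)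
    (K := C * R) fun n k => (lp.norm_apply_le_norm (by simp) (x n) k).trans (hxb n)
  let u : ℕ → lp (fun _ : ℕ => ℝ) 1 := fun n => x (φ (n + 1)) - x (φ n)
  have hu : WeakStarConvLp1 u 0 := by
    refine weakStarConvLp1_zero (K := C * R + C * R)
      (fun n => (norm_sub_le _ _).trans (add_le_add (hxb _) (hxb _))) fun k => ?_
    simpa [u] using ((hl k).comp (tendsto_add_atTop_nat 1)).sub (hl k)
  have hAu : ∀ n, A (u n) = (y (φ (n + 1)) - y (φ n) : M) := fun n => by
    simp [u, hx]
  refine ⟨fun n => A (u n), fun n => ?_, fun n => ?_, fun f => by simpa using hw u 0 hu f⟩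
  · beta_reduce
    rw [hAu]
    exact Subtype.property _
  · beta_reduce
    rw [hAu]
    exact hsep (hφ (Nat.lt_succ_self n)).ne.symm

/-- Norming functionals of a weakly null sequence, modified to be pointwise null on the range. -/
theorem exists_almost_biorthogonal (A : lp (fun _ : ℕ => ℝ) 1 →L[ℝ] Y) {v : ℕ → Y}
    (hv : ∀ n, 1 ≤ ‖v n‖)
    (hnull : ∀ f : Y →L[ℝ] ℝ, Tendsto (fun n => f (v n)) atTop (nhds 0)) :
    ∃ (g : ℕ → Y →L[ℝ] ℝ) (r : ℕ → ℕ), Tendsto r atTop atTop ∧ (∀ n, ‖g n‖ ≤ 2) ∧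
      (∀ n, 1 / 2 ≤ g n (v (r n))) ∧
      ∀ x, Tendsto (fun n => g n (A x)) atTop (nhds 0) := by
  choose f hfn hfv using fun n => exists_dual_vector'' ℝ (v n)
  have hfA : ∀ n, ‖(f n).comp A‖ ≤ ‖A‖ := fun n =>
    ((f n).opNorm_comp_le A).trans (mul_le_of_le_one_left (norm_nonneg _) (hfn n))
  obtain ⟨ψ, hψ, l, hl⟩ := exists_subseq_tendsto_coordinates
    (a := fun n k => (f n).comp A (lp.single 1 k (1 : ℝ))) (K := ‖A‖) fun n k =>
      (((f n).comp A).le_of_opNorm_le (hfA n) _).trans (by rw [norm_single_one, mul_one])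
  have hlim : ∀ x, ∃ c, Tendsto (fun n => f (ψ n) (A x)) atTop (nhds c) := fun x =>
    ⟨_, tendsto_apply_of_tendsto_single (h := fun n => (f (ψ n)).comp A)
      (fun n => hfA _) hl x⟩
  have hq : ∀ p, ∃ q, p < q ∧ |f (ψ p) (v (ψ q))| ≤ 1 / 2 := fun p =>
    ((eventually_gt_atTop p).and (eventually_abs_le_of_tendsto_zero
      ((hnull (f (ψ p))).comp hψ.tendsto_atTop) (by norm_num))).exists
  choose q hpq hq using hq
  have hqt : Tendsto q atTop atTop := tendsto_atTop_mono (fun p => (hpq p).le) tendsto_id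
  refine ⟨fun p => f (ψ (q p)) - f (ψ p), fun p => ψ (q p), hψ.tendsto_atTop.comp hqt,
    fun p => ?_, fun p => ?_, fun x => ?_⟩
  · exact (norm_sub_le _ _).trans (by linarith [hfn (ψ (q p)), hfn (ψ p)])
  · have h1 := hfv (ψ (q p))
    have h2 := hv (ψ (q p))
    have h3 := (abs_le.1 (hq p)).2
    simp only [RCLike.ofReal_real_eq_id, id] at h1
    rw [sub_apply, h1]
    linarith
  · obtain ⟨c, hc⟩ := hlim x
    simpa using (hc.comp hqt).sub hc

/-- A pointwise absolutely summable series of functionals with uniformly bounded partial sums on a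
subspace extends to a continuous functional. -/
theorem exists_functional_eq_tsum (M : Submodule ℝ Y) {g : ℕ → Y →L[ℝ] ℝ} {K : ℝ}
    (hK : ∀ y ∈ M, ∀ s : Finset ℕ, ∑ j ∈ s, |g j y| ≤ K * ‖y‖) :
    ∃ F : Y →L[ℝ] ℝ, ∀ y ∈ M, F y = ∑' j, g j y := by
  have habs : ∀ y ∈ M, Summable fun j => |g j y| := fun y hy =>
    summable_of_sum_le (fun _ => abs_nonneg _) (hK y hy)
  have hsum : ∀ y ∈ M, Summable fun j => g j y := fun y hy => (habs y hy).of_abs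
  let T : M →ₗ[ℝ] ℝ :=
    { toFun := fun y => ∑' j, g j y
      map_add' := fun y z => by
        simp only [Submodule.coe_add, map_add]
        exact (hsum y y.2).tsum_add (hsum z z.2)
      map_smul' := fun c y => by
        simp only [Submodule.coe_smul, map_smul, smul_eq_mul, RingHom.id_apply, tsum_mul_left] }
  let Φ : M →L[ℝ] ℝ := T.mkContinuous K fun y =>
    tsum_of_norm_bounded (habs y y.2).hasSum (fun _ => le_rfl) |>.trans
      ((habs y y.2).tsum_le_of_sum_le (hK y y.2))
  obtain ⟨F, hF, -⟩ := exists_extension_norm_eq M Φ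
  exact ⟨F, fun y hy => hF ⟨y, hy⟩⟩

theorem finiteDimensional_of_subset_range [CompleteSpace Y]
    (A : lp (fun _ : ℕ => ℝ) 1 →L[ℝ] Y) (hw : WeakStarToWeakSeqContinuous A)
    (M : Submodule ℝ Y) (hM : IsClosed (M : Set Y)) (hMA : (M : Set Y) ⊆ Set.range A) :
    FiniteDimensional ℝ M := by
  by_contra hfin
  obtain ⟨C, hC, hlift⟩ := exists_bounded_preimage A M hM hMA
  obtain ⟨v, hvM, hv, hnull⟩ := exists_weakly_null_seq A hw M hC hlift hfin
  obtain ⟨g, r, hr, hg2, hgv, hgA⟩ := exists_almost_biorthogonal A hv hnull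
  have hrow : ∀ f : Y →L[ℝ] ℝ,
      Tendsto (fun k => f (A (lp.single 1 k (1 : ℝ)))) atTop (nhds 0) := fun f => by
    simpa using hw _ 0 weakStarConvLp1_single f
  obtain ⟨n, hn, hdisj, hdiag⟩ := exists_gliding_hump
    (a := fun p k => g p (A (lp.single 1 k (1 : ℝ)))) (b := fun p q => g p (v (r q)))
    (fun p => hrow (g p)) (fun k => hgA _) (fun p => (hnull (g p)).comp hr)
    (fun q => by
      obtain ⟨x, hx⟩ := hMA (hvM (r q))
      simpa only [hx] using hgA x)
  have hcol : ∀ (s : Finset ℕ) (k : ℕ),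
      ∑ j ∈ s, |((g (n j)).comp A) (lp.single 1 k (1 : ℝ))| ≤ 2 * ‖A‖ + 2 := fun s k =>
    sum_le_of_pairwise_small (c := fun j => |((g (n j)).comp A) (lp.single 1 k (1 : ℝ))|)
      (fun j => by
        refine (((g (n j)).comp A).le_opNorm _).trans ?_
        rw [norm_single_one, mul_one]
        exact ((g (n j)).opNorm_comp_le A).trans
          (mul_le_mul_of_nonneg_right (hg2 _) (norm_nonneg _)))
      (by positivity) (hdisj k) s
  have hbound : ∀ y ∈ M, ∀ s : Finset ℕ,
      ∑ j ∈ s, |g (n j) y| ≤ (2 * ‖A‖ + 2) * C * ‖y‖ := fun y hy s => by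
    obtain ⟨x, rfl, hx⟩ := hlift y hy
    refine (sum_abs_apply_le (g := fun j => (g (n j)).comp A) (hcol s) x).trans ?_
    rw [mul_assoc]
    gcongr
  obtain ⟨F, hF⟩ := exists_functional_eq_tsum M (g := fun j => g (n j)) hbound
  have hlower : ∀ i, 1 / 4 ≤ F (v (r (n i))) := fun i => by
    have hs : Summable fun j => g (n j) (v (r (n i))) :=
      (summable_of_sum_le (fun _ => abs_nonneg _) (hbound _ (hvM _))).of_abs
    rw [hF _ (hvM _), hs.tsum_eq_add_tsum_ite i]
    have htail := tsum_of_norm_bounded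
      (f := fun j => if j = i then 0 else g (n j) (v (r (n i))))
      (hasSum_geometric_two.mul_left (1 / 8)) (fun j => by
        split_ifs with hji
        · rw [norm_zero]
          positivity
        · exact hdiag j i hji)
    have := (abs_le.1 htail).1
    linarith [hgv (n i)]
  have hlim := (hnull F).comp (hr.comp hn.tendsto_atTop)
  have := ge_of_tendsto' hlim hlower
  norm_num at this

end

/-- If a bounded linear operator `A : ℓ¹ → Y` with infinite-dimensional range is
weak*-to-weak sequentially continuous, then its range contains no infinite-dimensional closed
subspace of `Y`; in particular the range is not closed (ill-posedness of type II). -/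
theorem weakStarToWeak_implies_type_II
    {Y : Type*} [NormedAddCommGroup Y] [NormedSpace ℝ Y] [CompleteSpace Y]
    (hY : ¬ FiniteDimensional ℝ Y)
    (A : lp (fun _ : ℕ => ℝ) 1 →L[ℝ] Y)
    (hinf : ¬ FiniteDimensional ℝ (LinearMap.range A.toLinearMap))
    (hw : WeakStarToWeakSeqContinuous A) :
    (∀ M : Submodule ℝ Y, IsClosed (M : Set Y) → (M : Set Y) ⊆ Set.range A →
      FiniteDimensional ℝ M) ∧
    ¬ IsClosed (Set.range A) := by
  have hmain := finiteDimensional_of_subset_range A hw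
  exact ⟨hmain, fun hclosed => hinf (hmain (LinearMap.range A.toLinearMap) hclosed subset_rfl)⟩
end
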